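/- (Kelvin transform Dirichlet energy identity.) With K the Kelvin transform K(x) = p + rs·(x−p)/|x−p|² on ℝ², let u ∈ H¹ with u = 0 on ∂B_p(2r), and define û(x) = u(K(x)) − 4 log|x−p| for |x−p| ≥ s/2, û(x) = −4 log(s/2) for |x−p| ≤ s/2. Then ∫_{B_p(2r)} |∇û|² dx = ∫_{A_p(s/2, 2r)} |∇u|² dx + 32π(log(2r) − log(s/2)) − 16π ⨍_{∂B_p(s/2)} u dS. -/

import Mathlib

open MeasureTheory Metric Real Complex

/-! The Kelvin transform `K` is conformal and exchanges the two boundary circles of the annulus, so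
`v = u ∘ K` has the same Dirichlet energy as `u` there and the circle averages of `u` swapped.
Expanding `|∇(v - c log |x - p|)|²`, the cross term `⟨∇v, (x - p) / |x - p|²⟩` becomes in polar
coordinates the radial derivative of `v`, hence integrates to `2π` times the difference of the
circle averages of `v`. The remaining term `|x - p|⁻²` is the same cross term for
`v = log |x - p|`. -/

section Annulus

/-- The open annulus `A_p(a, b)` of radii `a < b` centred at `p`, in any metric space. -/
def annulus {X : Type*} [PseudoMetricSpace X] (p : X) (a b : ℝ) : Set X :=
  {x | a < dist x p ∧ dist x p < b}

/-- The closed annulus of radii `a ≤ b` centred at `p`, on which all integrands below are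
continuous. -/
def closedAnnulus {X : Type*} [PseudoMetricSpace X] (p : X) (a b : ℝ) : Set X :=
  {x | a ≤ dist x p ∧ dist x p ≤ b}

section Metric

variable {X : Type*} [PseudoMetricSpace X] {p : X} {a b : ℝ}

lemma annulus_subset_closedAnnulus : annulus p a b ⊆ closedAnnulus p a b :=
  fun _ hx => ⟨hx.1.le, hx.2.le⟩

lemma ne_center_of_mem_closedAnnulus (ha : 0 < a) {x : X} (hx : x ∈ closedAnnulus p a b) :
    x ≠ p := by
  rintro rfl
  exact (ha.trans_le hx.1).ne' (dist_self x)

lemma isOpen_annulus : IsOpen (annulus p a b) :=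
  isOpen_Ioo.preimage (continuous_id.dist continuous_const)

lemma isCompact_closedAnnulus [ProperSpace X] : IsCompact (closedAnnulus p a b) :=
  (isCompact_closedBall p b).of_isClosed_subset
    (isClosed_Icc.preimage (continuous_id.dist continuous_const)) fun _ hx => hx.2

lemma integrableOn_annulus_of_continuousOn [ProperSpace X] [MeasurableSpace X]
    [OpensMeasurableSpace X] [T2Space X] {μ : Measure X} [IsFiniteMeasureOnCompacts μ]
    {E : Type*} [NormedAddCommGroup E] {g : X → E} (hg : ContinuousOn g (closedAnnulus p a b)) :
    IntegrableOn g (annulus p a b) μ :=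
  (hg.integrableOn_compact isCompact_closedAnnulus).mono_set annulus_subset_closedAnnulus

end Metric

lemma setIntegral_ball_eq_setIntegral_annulus {F E : Type*} [NormedAddCommGroup F]
    [NormedSpace ℝ F] [MeasurableSpace F] [BorelSpace F] [FiniteDimensional ℝ F]
    {μ : Measure F} [μ.IsAddHaarMeasure] [NormedAddCommGroup E] [NormedSpace ℝ E]
    {p : F} {a b : ℝ} (ha : a ≠ 0) {g : F → E} (hg : ∀ x ∈ ball p a, g x = 0) :
    ∫ x in ball p b, g x ∂μ = ∫ x in annulus p a b, g x ∂μ := by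
  refine setIntegral_eq_of_subset_of_ae_sdiff_eq_zero measurableSet_ball.nullMeasurableSet
    (fun x hx => hx.2) ?_
  have hsphere : ∀ᵐ x ∂μ, x ∉ sphere p a :=
    measure_eq_zero_iff_ae_notMem.1 (Measure.addHaar_sphere_of_ne_zero μ p ha)
  filter_upwards [hsphere] with x hxa hx
  refine hg x (lt_of_not_ge fun hle => hx.2 ⟨lt_of_le_of_ne hle (Ne.symm hxa), hx.1⟩)

end Annulus

section PolarCoordinates

variable {E : Type*} [NormedAddCommGroup E] [NormedSpace ℝ E] {p : ℂ} {a b : ℝ}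

lemma circleMap_mem_annulus_iff {ρ : ℝ} (hρ : 0 ≤ ρ) (θ : ℝ) :
    circleMap p ρ θ ∈ annulus p a b ↔ ρ ∈ Set.Ioo a b := by
  simp [annulus, circleMap, abs_of_nonneg hρ]

lemma circleMap_mem_closedAnnulus (ha : 0 ≤ a) {ρ : ℝ} (hρ : ρ ∈ Set.Icc a b) (θ : ℝ) :
    circleMap p ρ θ ∈ closedAnnulus p a b := by
  simpa [closedAnnulus, circleMap, abs_of_nonneg (ha.trans hρ.1)] using hρ

lemma setIntegral_annulus_eq_setIntegral_prod (ha : 0 ≤ a) (g : ℂ → E) :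
    ∫ x in annulus p a b, g x =
      ∫ q in Set.Ioo a b ×ˢ Set.Ioo (-π) π, q.1 • g (circleMap p q.1 q.2) := by
  have hsub : Set.Ioo a b ×ˢ Set.Ioo (-π) π ⊆ polarCoord.target :=
    Set.prod_mono (fun ρ hρ => ha.trans_lt hρ.1) subset_rfl
  have hpolar (q : ℝ × ℝ) : p + Complex.polarCoord.symm q = circleMap p q.1 q.2 := by
    simp [circleMap, Complex.exp_mul_I]
  rw [← integral_indicator isOpen_annulus.measurableSet, ← integral_add_left_eq_self _ p,
    ← Complex.integral_comp_polarCoord_symm]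
  simp only [hpolar]
  rw [setIntegral_eq_of_subset_of_forall_sdiff_eq_zero
    polarCoord.open_target.measurableSet hsub]
  · refine setIntegral_congr_fun (measurableSet_Ioo.prod measurableSet_Ioo) fun q hq => ?_
    rw [Set.indicator_of_mem ((circleMap_mem_annulus_iff (hsub hq).1.le _).2 hq.1)]
  · rintro q ⟨hq, hq'⟩
    rw [Set.indicator_of_notMem, smul_zero]
    rw [circleMap_mem_annulus_iff hq.1.le]
    exact fun h => hq' ⟨h, hq.2⟩

lemma setIntegral_annulus_eq_integral_integral (ha : 0 ≤ a) (hab : a ≤ b) {g : ℂ → E}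
    (hg : ContinuousOn g (closedAnnulus p a b)) :
    ∫ x in annulus p a b, g x =
      ∫ θ in 0..2 * π, ∫ ρ in a..b, ρ • g (circleMap p ρ θ) := by
  set f : ℝ × ℝ → E := fun q => q.1 • g (circleMap p q.1 q.2)
  have hf : ContinuousOn f (Set.Icc a b ×ˢ Set.Icc (-π) π) :=
    continuousOn_fst.smul <| hg.comp circleMap.continuous.continuousOn
      fun q hq => circleMap_mem_closedAnnulus ha hq.1 q.2
  have hfint : IntegrableOn f (Set.Ioo a b ×ˢ Set.Ioo (-π) π) (volume.prod volume) :=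
    (hf.integrableOn_compact (isCompact_Icc.prod isCompact_Icc)).mono_set
      (Set.prod_mono Set.Ioo_subset_Icc_self Set.Ioo_subset_Icc_self)
  have hper : Function.Periodic (fun θ => ∫ ρ in a..b, f (ρ, θ)) (2 * π) := fun θ => by
    simp only [f, periodic_circleMap p _ θ]
  calc ∫ x in annulus p a b, g x
      = ∫ q in Set.Ioo a b ×ˢ Set.Ioo (-π) π, f q := setIntegral_annulus_eq_setIntegral_prod ha g
    _ = ∫ θ in Set.Ioo (-π) π, ∫ ρ in Set.Ioo a b, f (ρ, θ) := by
        rw [IntegrableOn, ← Measure.prod_restrict] at hfint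
        rw [Measure.volume_eq_prod, ← Measure.prod_restrict, integral_prod_symm _ hfint]
    _ = ∫ θ in (-π)..π, ∫ ρ in a..b, f (ρ, θ) := by
        simp only [intervalIntegral.integral_of_le hab,
          intervalIntegral.integral_of_le (neg_le_self pi_pos.le), integral_Ioc_eq_integral_Ioo]
    _ = ∫ θ in 0..2 * π, ∫ ρ in a..b, f (ρ, θ) := by
        have h := hper.intervalIntegral_add_eq (-π) 0
        rwa [zero_add, show -π + 2 * π = π by ring] at h

end PolarCoordinates

section LogGradient

variable {F : Type*} [NormedAddCommGroup F] [InnerProductSpace ℝ F] {p x : F}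

/-- The vector field `(x - p) / |x - p|²`, the gradient of `x ↦ log |x - p|`
(equal to `0` at `x = p`). -/
noncomputable def logDistGradient (p x : F) : F := (dist x p ^ 2)⁻¹ • (x - p)

lemma hasFDerivAt_log_dist (hx : x ≠ p) :
    HasFDerivAt (fun y => Real.log (dist y p)) (innerSL ℝ (logDistGradient p x)) x := by
  have hnorm : ‖x - p‖ ≠ 0 := norm_ne_zero_iff.2 (sub_ne_zero.2 hx)
  have hsq := (((hasFDerivAt_id x).sub_const p).norm_sq.log (pow_ne_zero 2 hnorm)).const_mul 2⁻¹
  have hlog : (fun y => Real.log (dist y p)) = fun y => 2⁻¹ * Real.log (‖id y - p‖ ^ 2) := by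
    funext y
    rw [Real.log_pow, dist_eq_norm]
    simp
  rw [hlog]
  refine hsq.congr_fderiv ?_
  simp only [logDistGradient, dist_eq_norm, id_eq, map_smul, ContinuousLinearMap.comp_id]
  module

lemma contDiffAt_log_dist {n : WithTop ℕ∞} (hx : x ≠ p) :
    ContDiffAt ℝ n (fun y => Real.log (dist y p)) x :=
  (contDiffAt_id.dist ℝ contDiffAt_const hx).log (dist_ne_zero.2 hx)

lemma continuousAt_logDistGradient (hx : x ≠ p) : ContinuousAt (logDistGradient p) x := by
  unfold logDistGradient
  have := pow_ne_zero 2 (dist_ne_zero.2 hx)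
  fun_prop (disch := assumption)

lemma norm_sub_innerSL_sq [CompleteSpace F] (L : F →L[ℝ] ℝ) (w : F) :
    ‖L - innerSL ℝ w‖ ^ 2 = ‖L‖ ^ 2 - 2 * L w + ‖w‖ ^ 2 := by
  obtain ⟨z, rfl⟩ := (InnerProductSpace.toDual ℝ F).surjective L
  have hw : innerSL ℝ w = InnerProductSpace.toDual ℝ F w := rfl
  simp only [hw, ← map_sub, LinearIsometryEquiv.norm_map, norm_sub_sq_real,
    InnerProductSpace.toDual_apply_apply]

end LogGradient

section AnnulusEnergy

variable {p : ℂ} {a b : ℝ}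

lemma radius_smul_logDistGradient_circleMap {ρ : ℝ} (hρ : ρ ≠ 0) (θ : ℝ) :
    ρ • logDistGradient p (circleMap p ρ θ) = Complex.exp (θ * I) := by
  have hρ' : (ρ : ℂ) ≠ 0 := ofReal_ne_zero.2 hρ
  have hdist : dist (circleMap p ρ θ) p ^ 2 = ρ ^ 2 := by simp [circleMap]
  rw [logDistGradient, hdist, circleMap_sub_center, circleMap_zero, real_smul, real_smul]
  push_cast
  field_simp

lemma hasDerivAt_comp_circleMap_radius {E : Type*} [NormedAddCommGroup E] [NormedSpace ℝ E]
    {v : ℂ → E} {ρ θ : ℝ} (hρ : ρ ≠ 0) (hv : DifferentiableAt ℝ v (circleMap p ρ θ)) :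
    HasDerivAt (fun ρ => v (circleMap p ρ θ))
      (ρ • fderiv ℝ v (circleMap p ρ θ) (logDistGradient p (circleMap p ρ θ))) ρ := by
  have hray : HasDerivAt (fun ρ => circleMap p ρ θ) (Complex.exp (θ * I)) ρ := by
    simpa [circleMap] using
      ((hasDerivAt_id ρ).ofReal_comp.mul_const (Complex.exp (θ * I))).const_add p
  refine (hv.hasFDerivAt.comp_hasDerivAt ρ hray).congr_deriv ?_
  rw [← map_smul, radius_smul_logDistGradient_circleMap hρ]

lemma setIntegral_annulus_fderiv_logDistGradient {E : Type*} [NormedAddCommGroup E]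
    [NormedSpace ℝ E] [CompleteSpace E] (ha : 0 < a) (hab : a ≤ b) {v : ℂ → E}
    (hv : ∀ x ∈ closedAnnulus p a b, ContDiffAt ℝ 1 v x) :
    ∫ x in annulus p a b, fderiv ℝ v x (logDistGradient p x) =
      (2 * π) • (circleAverage v p b - circleAverage v p a) := by
  have hcont : ContinuousOn (fun x => fderiv ℝ v x (logDistGradient p x))
      (closedAnnulus p a b) := fun x hx =>
    (((hv x hx).continuousAt_fderiv one_ne_zero).clm_apply
      (continuousAt_logDistGradient
        (ne_center_of_mem_closedAnnulus ha hx))).continuousWithinAt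
  have hradial (θ : ℝ) : ∫ ρ in a..b, ρ • fderiv ℝ v (circleMap p ρ θ)
      (logDistGradient p (circleMap p ρ θ)) = v (circleMap p b θ) - v (circleMap p a θ) := by
    have hmem : ∀ ρ ∈ Set.uIcc a b, circleMap p ρ θ ∈ closedAnnulus p a b := fun ρ hρ =>
      circleMap_mem_closedAnnulus ha.le (Set.uIcc_of_le hab ▸ hρ) θ
    have hcont_ray : ContinuousOn (fun ρ => ρ • fderiv ℝ v (circleMap p ρ θ)
        (logDistGradient p (circleMap p ρ θ))) (Set.uIcc a b) :=
      continuousOn_id.smul (hcont.comp (by fun_prop) hmem)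
    refine intervalIntegral.integral_eq_sub_of_hasDerivAt
      (f := fun ρ => v (circleMap p ρ θ)) (fun ρ hρ => ?_) hcont_ray.intervalIntegrable
    have hρ0 : ρ ≠ 0 := (ha.trans_le (Set.uIcc_of_le hab ▸ hρ : ρ ∈ Set.Icc a b).1).ne'
    exact hasDerivAt_comp_circleMap_radius hρ0 ((hv _ (hmem ρ hρ)).differentiableAt one_ne_zero)
  have hcircle {R : ℝ} (hR : R ∈ Set.Icc a b) : CircleIntegrable v p R := by
    refine ContinuousOn.circleIntegrable (ha.le.trans hR.1) fun x hx => ?_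
    refine (hv x ?_).continuousAt.continuousWithinAt
    rwa [closedAnnulus, Set.mem_ofPred_eq, mem_sphere.1 hx]
  rw [setIntegral_annulus_eq_integral_integral ha.le hab hcont]
  simp only [hradial]
  rw [intervalIntegral.integral_sub (hcircle ⟨hab, le_rfl⟩) (hcircle ⟨le_rfl, hab⟩)]
  simp only [circleAverage_def, ← smul_sub]
  rw [smul_inv_smul₀ two_pi_pos.ne']

lemma setIntegral_annulus_norm_logDistGradient_sq (ha : 0 < a) (hab : a ≤ b) :
    ∫ x in annulus p a b, ‖logDistGradient p x‖ ^ 2 =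
      2 * π * (Real.log b - Real.log a) := by
  have havg {R : ℝ} (hR : 0 < R) :
      circleAverage (fun x => Real.log (dist x p)) p R = Real.log R :=
    circleAverage_const_on_circle fun x hx => by rw [mem_sphere.1 hx, abs_of_pos hR]
  have hlog := setIntegral_annulus_fderiv_logDistGradient ha hab (p := p) fun x hx =>
    contDiffAt_log_dist (ne_center_of_mem_closedAnnulus ha hx)
  rw [havg ha, havg (ha.trans_le hab), smul_eq_mul] at hlog
  rw [← hlog]
  refine setIntegral_congr_fun isOpen_annulus.measurableSet fun x hx => ?_
  have hxp := ne_center_of_mem_closedAnnulus ha (annulus_subset_closedAnnulus hx)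
  simp only [(hasFDerivAt_log_dist hxp).fderiv, innerSL_apply_apply, real_inner_self_eq_norm_sq]

theorem setIntegral_annulus_norm_fderiv_sub_log_sq (ha : 0 < a) (hab : a ≤ b) {v : ℂ → ℝ}
    (hv : ∀ x ∈ closedAnnulus p a b, ContDiffAt ℝ 1 v x) (c : ℝ) :
    ∫ x in annulus p a b, ‖fderiv ℝ (fun y => v y - c * Real.log (dist y p)) x‖ ^ 2 =
      (∫ x in annulus p a b, ‖fderiv ℝ v x‖ ^ 2) -
        4 * π * c * (circleAverage v p b - circleAverage v p a) +
        2 * π * c ^ 2 * (Real.log b - Real.log a) := by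
  have hne {x : ℂ} (hx : x ∈ closedAnnulus p a b) : x ≠ p := ne_center_of_mem_closedAnnulus ha hx
  have hDv : ContinuousOn (fderiv ℝ v) (closedAnnulus p a b) := fun x hx =>
    ((hv x hx).continuousAt_fderiv one_ne_zero).continuousWithinAt
  have hw : ContinuousOn (logDistGradient p) (closedAnnulus p a b) := fun x hx =>
    (continuousAt_logDistGradient (hne hx)).continuousWithinAt
  have hexpand : ∀ x ∈ annulus p a b,
      ‖fderiv ℝ (fun y => v y - c * Real.log (dist y p)) x‖ ^ 2 =
        ‖fderiv ℝ v x‖ ^ 2 - 2 * c * fderiv ℝ v x (logDistGradient p x) +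
          c ^ 2 * ‖logDistGradient p x‖ ^ 2 := by
    intro x hx
    replace hx := annulus_subset_closedAnnulus hx
    have hderiv := ((hv x hx).differentiableAt one_ne_zero).hasFDerivAt.sub
      ((hasFDerivAt_log_dist (hne hx)).const_mul c)
    rw [← map_smul] at hderiv
    change ‖fderiv ℝ (v - fun y => c * Real.log (dist y p)) x‖ ^ 2 = _
    rw [hderiv.fderiv, norm_sub_innerSL_sq, map_smul, norm_smul, mul_pow,
      norm_eq_abs, sq_abs, smul_eq_mul]
    ring
  rw [setIntegral_congr_fun isOpen_annulus.measurableSet hexpand, integral_add, integral_sub,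
    integral_const_mul, integral_const_mul, setIntegral_annulus_fderiv_logDistGradient ha hab hv,
    setIntegral_annulus_norm_logDistGradient_sq ha hab, smul_eq_mul]
  · ring
  · exact integrableOn_annulus_of_continuousOn (by fun_prop)
  · exact integrableOn_annulus_of_continuousOn (by fun_prop)
  · exact integrableOn_annulus_of_continuousOn (by fun_prop)
  · exact integrableOn_annulus_of_continuousOn (by fun_prop)

end AnnulusEnergy

section Conformal

open Module

variable {F G : Type*} [NormedAddCommGroup F] [InnerProductSpace ℝ F] [FiniteDimensional ℝ F]
  [NormedAddCommGroup G] [NormedSpace ℝ G]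

lemma norm_comp_pow_finrank_of_isConformalMap {A : F →L[ℝ] F} (hA : IsConformalMap A)
    (L : F →L[ℝ] G) : ‖L ∘L A‖ ^ finrank ℝ F = |A.det| * ‖L‖ ^ finrank ℝ F := by
  obtain ⟨c, -, e, rfl⟩ := hA
  have hdet : |e.toContinuousLinearMap.det| = 1 := by
    rw [ContinuousLinearMap.det, ← norm_eq_abs, ← LinearMap.normDet_eq_norm_det]
    exact e.normDet_eq_one
  have hnorm : ‖L ∘L e.toContinuousLinearMap‖ = ‖L‖ :=
    L.opNorm_comp_linearIsometryEquiv (e.toLinearIsometryEquiv rfl)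
  rw [ContinuousLinearMap.comp_smul, norm_smul, hnorm, ContinuousLinearMap.det,
    ContinuousLinearMap.toLinearMap_smul, LinearMap.det_smul, ← ContinuousLinearMap.det, abs_mul,
    hdet, abs_pow, mul_one, mul_pow, norm_eq_abs]

theorem setIntegral_norm_fderiv_comp_pow_finrank_of_conformalAt [MeasurableSpace F]
    [BorelSpace F] {μ : Measure F} [μ.IsAddHaarMeasure] {s : Set F} (hs : MeasurableSet s)
    {f : F → F} (hf : ∀ x ∈ s, ConformalAt f x) (hinj : Set.InjOn f s) {u : F → G}
    (hu : ∀ x ∈ s, DifferentiableAt ℝ u (f x)) :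
    ∫ x in s, ‖fderiv ℝ (u ∘ f) x‖ ^ finrank ℝ F ∂μ =
      ∫ x in f '' s, ‖fderiv ℝ u x‖ ^ finrank ℝ F ∂μ := by
  have hderiv : ∀ x ∈ s, HasFDerivAt f (fderiv ℝ f x) x := fun x hx =>
    (hf x hx).differentiableAt.hasFDerivAt
  rw [integral_image_eq_integral_abs_det_fderiv_smul μ hs
    (fun x hx => (hderiv x hx).hasFDerivWithinAt) hinj]
  refine setIntegral_congr_fun hs fun x hx => ?_
  have hconf : IsConformalMap (fderiv ℝ f x) := conformalAt_iff_isConformalMap_fderiv.1 (hf x hx)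
  simp only [((hu x hx).hasFDerivAt.comp x (hderiv x hx)).fderiv, smul_eq_mul,
    norm_comp_pow_finrank_of_isConformalMap hconf]

end Conformal

section Inversion

open EuclideanGeometry

variable {F : Type*} [NormedAddCommGroup F] [InnerProductSpace ℝ F] {p : F} {a b R : ℝ}

lemma inversion_sqrt_apply {k : ℝ} (hk : 0 ≤ k) (p x : F) :
    inversion p √k x = p + (k / dist x p ^ 2) • (x - p) := by
  rw [inversion, div_pow, Real.sq_sqrt hk, vsub_eq_sub, vadd_eq_add, add_comm]

lemma inversion_sqrt_mem_closedAnnulus (ha : 0 < a) {x : F} (hx : x ∈ closedAnnulus p a b) :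
    inversion p √(a * b) x ∈ closedAnnulus p a b := by
  have hd : 0 < dist x p := ha.trans_le hx.1
  have hb : 0 < b := hd.trans_le hx.2
  rw [closedAnnulus, Set.mem_ofPred_eq, dist_inversion_center, Real.sq_sqrt (by positivity),
    le_div_iff₀ hd, div_le_iff₀ hd, mul_comm a b, mul_comm a, mul_le_mul_iff_left₀ ha,
    mul_le_mul_iff_right₀ hb]
  exact hx.symm

lemma inversion_sqrt_mem_annulus (ha : 0 < a) {x : F} (hx : x ∈ annulus p a b) :
    inversion p √(a * b) x ∈ annulus p a b := by
  have hd : 0 < dist x p := ha.trans hx.1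
  have hb : 0 < b := hd.trans hx.2
  rw [annulus, Set.mem_ofPred_eq, dist_inversion_center, Real.sq_sqrt (by positivity),
    lt_div_iff₀ hd, div_lt_iff₀ hd, mul_comm a b, mul_comm a, mul_lt_mul_iff_left₀ ha,
    mul_lt_mul_iff_right₀ hb]
  exact hx.symm

lemma inversion_sqrt_image_annulus (ha : 0 < a) (hb : 0 < b) :
    inversion p √(a * b) '' annulus p a b = annulus p a b := by
  have hR : √(a * b) ≠ 0 := (Real.sqrt_pos.2 (mul_pos ha hb)).ne'
  refine Set.Subset.antisymm
    (Set.image_subset_iff.2 fun x hx => inversion_sqrt_mem_annulus ha hx) fun x hx => ?_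
  exact ⟨_, inversion_sqrt_mem_annulus ha hx, inversion_inversion p hR x⟩

lemma contDiffAt_comp_inversion_sqrt {G : Type*} [NormedAddCommGroup G] [NormedSpace ℝ G] {n : ℕ∞}
    (ha : 0 < a) {u : F → G} (hu : ∀ x ∈ closedAnnulus p a b, ContDiffAt ℝ n u x) {x : F}
    (hx : x ∈ closedAnnulus p a b) : ContDiffAt ℝ n (u ∘ inversion p √(a * b)) x :=
  (hu _ (inversion_sqrt_mem_closedAnnulus ha hx)).comp x
    (contDiffAt_const.inversion contDiffAt_const contDiffAt_id
      (ne_center_of_mem_closedAnnulus ha hx))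

lemma conformalAt_inversion {x : F} (hR : R ≠ 0) (hx : x ≠ p) :
    ConformalAt (inversion p R) x :=
  ⟨_, hasFDerivAt_inversion hx, (R / dist x p) ^ 2,
    pow_ne_zero 2 (div_ne_zero hR (dist_ne_zero.2 hx)),
    (ℝ ∙ (x - p))ᗮ.reflection.toLinearIsometry, rfl⟩

theorem setIntegral_annulus_norm_fderiv_comp_inversion_pow_finrank [FiniteDimensional ℝ F]
    [MeasurableSpace F] [BorelSpace F] {μ : Measure F} [μ.IsAddHaarMeasure] {G : Type*}
    [NormedAddCommGroup G] [NormedSpace ℝ G] (ha : 0 < a) (hb : 0 < b) {u : F → G}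
    (hu : ∀ x ∈ annulus p a b, DifferentiableAt ℝ u x) :
    ∫ x in annulus p a b, ‖fderiv ℝ (u ∘ inversion p √(a * b)) x‖ ^ Module.finrank ℝ F ∂μ =
      ∫ x in annulus p a b, ‖fderiv ℝ u x‖ ^ Module.finrank ℝ F ∂μ := by
  have hR : √(a * b) ≠ 0 := (Real.sqrt_pos.2 (mul_pos ha hb)).ne'
  have hconf : ∀ x ∈ annulus p a b, ConformalAt (inversion p √(a * b)) x := fun x hx =>
    conformalAt_inversion hR
      (ne_center_of_mem_closedAnnulus ha (annulus_subset_closedAnnulus hx))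
  rw [setIntegral_norm_fderiv_comp_pow_finrank_of_conformalAt isOpen_annulus.measurableSet hconf
    (inversion_injective p hR).injOn (fun x hx => hu _ (inversion_sqrt_mem_annulus ha hx)),
    inversion_sqrt_image_annulus ha hb]

lemma inversion_circleMap (p : ℂ) (R ρ θ : ℝ) :
    inversion p R (circleMap p ρ θ) = circleMap p (R ^ 2 / ρ) θ := by
  rcases eq_or_ne ρ 0 with rfl | hρ
  · simp
  · have hρ' : (ρ : ℂ) ≠ 0 := ofReal_ne_zero.2 hρ
    have hdist : dist (circleMap p ρ θ) p ^ 2 = ρ ^ 2 := by simp [circleMap]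
    rw [inversion, div_pow, hdist, vsub_eq_sub, vadd_eq_add, circleMap_sub_center, circleMap_zero,
      real_smul, add_comm, circleMap]
    push_cast
    field_simp

lemma circleAverage_comp_inversion {E : Type*} [NormedAddCommGroup E] [NormedSpace ℝ E]
    (u : ℂ → E) (p : ℂ) (R ρ : ℝ) :
    circleAverage (u ∘ inversion p R) p ρ = circleAverage u p (R ^ 2 / ρ) := by
  simp only [circleAverage_def, Function.comp_apply, inversion_circleMap]

end Inversion

section Kelvin

open EuclideanGeometry

variable {u : ℂ → ℝ} {p : ℂ} {a b : ℝ}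

/-- The function `û`: outside the disc `B_p(a)` it is `u ∘ K - c log |x - p|`, where the Kelvin
transform `K` is the inversion exchanging the circles `∂B_p(a)` and `∂B_p(b)`, and inside it is the
constant `k`. -/
noncomputable def kelvinExtension (u : ℂ → ℝ) (p : ℂ) (a b c k : ℝ) (y : ℂ) : ℝ :=
  if a ≤ dist y p then
    u (p + ((a * b) / dist y p ^ 2) • (y - p)) - c * Real.log (dist y p)
  else k

lemma fderiv_kelvinExtension_of_mem_ball (c k : ℝ) {x : ℂ} (hx : x ∈ ball p a) :
    fderiv ℝ (kelvinExtension u p a b c k) x = 0 := by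
  have hconst : kelvinExtension u p a b c k =ᶠ[nhds x] fun _ => k := by
    filter_upwards [isOpen_ball.mem_nhds hx] with y hy using if_neg (not_le.2 hy)
  rw [hconst.fderiv_eq, fderiv_fun_const, Pi.zero_apply]

lemma fderiv_kelvinExtension_of_mem_annulus (ha : 0 ≤ a) (c k : ℝ) {x : ℂ}
    (hx : x ∈ annulus p a b) :
    fderiv ℝ (kelvinExtension u p a b c k) x =
      fderiv ℝ (fun y => (u ∘ inversion p √(a * b)) y - c * Real.log (dist y p)) x := by
  have hab : 0 ≤ a * b := mul_nonneg ha (ha.trans (hx.1.trans hx.2).le)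
  refine Filter.EventuallyEq.fderiv_eq ?_
  filter_upwards [isOpen_annulus.mem_nhds hx] with y hy
  rw [kelvinExtension, if_pos hy.1.le, Function.comp_apply, inversion_sqrt_apply hab]

theorem stmt8_general (ha : 0 < a) (hab : a ≤ b)
    (hu : ∀ x ∈ closedAnnulus p a b, ContDiffAt ℝ 1 u x) (c k : ℝ) :
    ∫ x in ball p b, ‖fderiv ℝ (kelvinExtension u p a b c k) x‖ ^ 2 =
      (∫ x in annulus p a b, ‖fderiv ℝ u x‖ ^ 2) +
        2 * π * c ^ 2 * (Real.log b - Real.log a) -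
        4 * π * c * (circleAverage u p a - circleAverage u p b) := by
  have hb : 0 < b := ha.trans_le hab
  have hR : √(a * b) ^ 2 = a * b := Real.sq_sqrt (mul_pos ha hb).le
  have henergy : ∫ x in annulus p a b, ‖fderiv ℝ (u ∘ inversion p √(a * b)) x‖ ^ 2 =
      ∫ x in annulus p a b, ‖fderiv ℝ u x‖ ^ 2 := by
    simpa only [Complex.finrank_real_complex] using
      setIntegral_annulus_norm_fderiv_comp_inversion_pow_finrank (μ := volume) ha hb fun x hx =>
        (hu x (annulus_subset_closedAnnulus hx)).differentiableAt one_ne_zero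
  calc ∫ x in ball p b, ‖fderiv ℝ (kelvinExtension u p a b c k) x‖ ^ 2
      = ∫ x in annulus p a b, ‖fderiv ℝ (kelvinExtension u p a b c k) x‖ ^ 2 :=
        setIntegral_ball_eq_setIntegral_annulus ha.ne' fun x hx => by
          simp [fderiv_kelvinExtension_of_mem_ball c k hx]
    _ = ∫ x in annulus p a b,
          ‖fderiv ℝ (fun y => (u ∘ inversion p √(a * b)) y - c * Real.log (dist y p)) x‖ ^ 2 :=
        setIntegral_congr_fun isOpen_annulus.measurableSet fun x hx => by
          simp only [fderiv_kelvinExtension_of_mem_annulus ha.le c k hx]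
    _ = _ := by
        rw [setIntegral_annulus_norm_fderiv_sub_log_sq ha hab
            (fun x hx => contDiffAt_comp_inversion_sqrt ha hu hx),
          henergy, circleAverage_comp_inversion, circleAverage_comp_inversion, hR,
          mul_div_cancel_left₀ b ha.ne', mul_div_cancel_right₀ a hb.ne']
        ring

end Kelvin

/-- Kelvin transform Dirichlet energy identity in the plane: with
`K(x) = p + rs(x−p)/|x−p|²`, `u` of class `C¹` vanishing on `∂B_p(2r)`, and
`û(x) = u(K(x)) − 4 log|x−p|` for `|x−p| ≥ s/2`, `û(x) = −4 log(s/2)` for `|x−p| ≤ s/2`,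
one has
`∫_{B_p(2r)} |∇û|² = ∫_{A_p(s/2,2r)} |∇u|² + 32π(log(2r) − log(s/2)) − 16π ⨍_{∂B_p(s/2)} u`,
the boundary average being written via the parametrization `θ ↦ p + (s/2)e^{iθ}`. -/
theorem stmt8 (p : ℂ) (s r : ℝ) (hs : 0 < s) (hsr : s < r)
    (u : ℂ → ℝ) (hu : ContDiff ℝ 1 u)
    (hu0 : ∀ x ∈ sphere p (2 * r), u x = 0)
    (hint : IntegrableOn (fun y => ‖fderiv ℝ u y‖ ^ 2)
      {x : ℂ | s / 2 < dist x p ∧ dist x p < 2 * r}) :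
    (∫ x in ball p (2 * r),
        ‖fderiv ℝ (fun y : ℂ =>
          if s / 2 ≤ dist y p then
            u (p + ((r * s) / dist y p ^ 2) • (y - p)) - 4 * Real.log (dist y p)
          else -4 * Real.log (s / 2)) x‖ ^ 2) =
      (∫ x in {x : ℂ | s / 2 < dist x p ∧ dist x p < 2 * r}, ‖fderiv ℝ u x‖ ^ 2) +
        32 * Real.pi * (Real.log (2 * r) - Real.log (s / 2)) -
        16 * Real.pi *
          ((2 * Real.pi)⁻¹ * ∫ θ in (0 : ℝ)..(2 * Real.pi),
            u (p + (s / 2) * Complex.exp (θ * I))) := by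
  have houter : circleAverage u p (2 * r) = 0 :=
    circleAverage_const_on_circle fun x hx => hu0 x (by rwa [abs_of_pos (by linarith)] at hx)
  have h := stmt8_general (p := p) (half_pos hs) (by linarith : s / 2 ≤ 2 * r)
    (fun x _ => hu.contDiffAt) 4 (-4 * Real.log (s / 2))
  unfold kelvinExtension at h
  rw [show s / 2 * (2 * r) = r * s by ring, houter, annulus] at h
  rw [h, circleAverage_def]
  simp only [circleMap, smul_eq_mul, ofReal_div, ofReal_ofNat]
  ring
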